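/- Assume q ≡ 3 (mod 4). Let Ĵ ∈ F^I be the all-one vector and let μ₂ : F^I → F^I be the F-linear map whose matrix is A^2 + Id + J, where Id is the identity matrix and J is the all-one matrix. Then Ker(φ) is the internal direct sum of the trivial F[H]-submodule spanned by Ĵ and the F[H]-submodule Im(μ₂). -/

import Mathlib

/-!
Everything follows from two facts about the incidence matrix `A` over a field of characteristic 2
when `q ≡ 3 (mod 4)`: every row sum of `A` vanishes and `A ^ 3 = A`; moreover `|I|` is odd.
Indeed, `A (A² + 1 + J) = A³ + A = 0` gives `Im μ₂ ≤ Ker φ`, and `φ x = 0` gives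
`x = μ₂ x + x J`, so `Ker φ` is the sum of the two submodules.  The sum is direct because the
coordinates of a vector of `Im μ₂` add up to `0` (as `J + |I| J = 0`), while those of `Ĵ` add up
to `|I| = 1`.

The parity facts are all obtained from reflections.  If `Q(w) ≠ 0`, the reflection in `w` is an
involution of `I` whose fixed points are `⟨w⟩` and the points of `w^⊥`, so for every invariant
function `f` (`sum_reflection`)
  `∑_I f = [⟨w⟩ internal] f(⟨w⟩) + ∑_{r ∈ w^⊥} f(r)`.
The hypothesis on `q` enters through the self-polar triangle lemma `internal_of_perp`: since `-1` is
a nonsquare, two conjugate internal points have an internal common conjugate.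

* Row sums: reflect in an internal point `w` of `p^⊥`; the count is `1 + 1`.
* `|I|` is odd: reflect in an internal point.
* `A³ = A` at `(p, s)`, `p ≠ s`: reflect in the pole `c` of the line `ps`, which fixes `p` and `s`.
  The surviving terms of `∑_r A(p,r) A²(r,s)` are `r = c` and the point `d` conjugate to both
  `p` and `c`; off the diagonal, `A²(r,s) = 1` iff the pole of `rs` is internal.
-/

open scoped Classical

noncomputable section

set_option linter.unusedSectionVars false

namespace ConicPaper

variable (K : Type) [Field K] [Fintype K]

/-- Points (and also lines, via homogeneous coordinates) of `PG(2,q)`. -/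
abbrev Pt := Projectivization K (Fin 3 → K)

instance : Fintype (Pt K) := @Fintype.ofFinite _ (Quotient.finite _)

/-- `a` is a nonsquare in `K`. -/
def Nonsq (a : K) : Prop := ¬ IsSquare a

/-- The quadratic form `Q(x0,x1,x2) = x1^2 - x0*x2` defining the conic. -/
def Qf (v : Fin 3 → K) : K := v 1 ^ 2 - v 0 * v 2

/-- A point is internal when `Q` of (a representative of) it is a nonsquare. -/
def Internal (p : Pt K) : Prop := Nonsq K (Qf K p.rep)

/-- A point is external when `Q` of it is a nonzero square. -/
def External (p : Pt K) : Prop := Qf K p.rep ≠ 0 ∧ IsSquare (Qf K p.rep)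

/-- The point `p` lies on the line `ℓ = [b0,b1,b2]`. -/
def OnL (p ℓ : Pt K) : Prop :=
  p.rep 0 * ℓ.rep 0 + p.rep 1 * ℓ.rep 1 + p.rep 2 * ℓ.rep 2 = 0

/-- Discriminant `b1^2 - 4 b0 b2` of a line. -/
def lineDisc (ℓ : Pt K) : K := ℓ.rep 1 ^ 2 - 4 * ℓ.rep 0 * ℓ.rep 2

/-- A line is a passant when its discriminant is a nonsquare. -/
def Passant (ℓ : Pt K) : Prop := Nonsq K (lineDisc K ℓ)

/-- A line is a secant when its discriminant is a nonzero square. -/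
def Secant (ℓ : Pt K) : Prop := lineDisc K ℓ ≠ 0 ∧ IsSquare (lineDisc K ℓ)

/-- The incidence pairing of the vector `w` with the polar line
`p^⊥ = [z, -2y, x]` of the point `p = (x,y,z)`. -/
def perpDot (p : Pt K) (w : Fin 3 → K) : K :=
  w 0 * p.rep 2 + w 1 * (-2 * p.rep 1) + w 2 * p.rep 0

/-- The point `r` lies on the passant line `p^⊥`. -/
def OnPerp (p r : Pt K) : Prop := perpDot K p r.rep = 0

/-- The (finite) set `I` of internal points, as a type. -/
abbrev Ipts := {p : Pt K // Internal K p}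

instance : Fintype (Ipts K) := Fintype.ofFinite _

/-- The action of a (nonsingular) matrix `M` on points of `PG(2,q)`:
`p ↦ p·M`.  (If `p.rep ᵥ* M` were zero -- impossible for invertible `M` --
we return `p`, making the function total.) -/
def actPt (M : Matrix (Fin 3) (Fin 3) K) (p : Pt K) : Pt K :=
  if h : Matrix.vecMul p.rep M ≠ 0 then Projectivization.mk K (Matrix.vecMul p.rep M) h else p

/-- The group `H ≅ PSL(2,q)`, given by its set of matrix representatives. -/
def Hset : Set (Matrix (Fin 3) (Fin 3) K) :=
  {M | ∃ a b c d : K, a * d - b * c = 1 ∧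
    M = !![a^2, a*b, b^2; 2*a*c, a*d + b*c, 2*b*d; c^2, c*d, d^2]}

/-- An algebraic closure `F` of `F_2`. -/
abbrev F2bar := AlgebraicClosure (ZMod 2)

/-- The incidence matrix `A`, regarded over `F`. -/
def AmatF : Matrix (Ipts K) (Ipts K) F2bar :=
  Matrix.of fun p r => if OnPerp K p.1 r.1 then 1 else 0

/-- The map `φ : F^I → F^I`, `e_p ↦ ∑_{r ∈ I, r on p^⊥} e_r`; its matrix
with respect to the standard basis is `A`. -/
def phi : (Ipts K → F2bar) →ₗ[F2bar] (Ipts K → F2bar) :=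
  Matrix.vecMulLinear (AmatF K)

/-- The permutation matrix (over `F`) of the action of `M ∈ H` on `I`. -/
def actMat (M : Matrix (Fin 3) (Fin 3) K) : Matrix (Ipts K) (Ipts K) F2bar :=
  Matrix.of fun p r => if actPt K M p.1 = r.1 then 1 else 0

/-- The action of `M ∈ H` on `F^I`, extending `e_p ↦ e_{p^M}` linearly. -/
def actF (M : Matrix (Fin 3) (Fin 3) K) :
    (Ipts K → F2bar) →ₗ[F2bar] (Ipts K → F2bar) :=
  Matrix.vecMulLinear (actMat K M)

/-- The all-one vector `Ĵ ∈ F^I`. -/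
def Jvec : Ipts K → F2bar := fun _ => 1

/-- The all-one matrix `J`. -/
def JmatF : Matrix (Ipts K) (Ipts K) F2bar := Matrix.of fun _ _ => 1

/-- The map `μ₂ : F^I → F^I` with matrix `A^2 + Id + J`. -/
def mu2 : (Ipts K → F2bar) →ₗ[F2bar] (Ipts K → F2bar) :=
  Matrix.vecMulLinear (AmatF K ^ 2 + 1 + JmatF K)

variable {K}

/-! ### The polar form and coordinates of projective points -/

/-- The symmetric bilinear form polar to the conic, normalised so that `B(v, v) = -2 Q(v)`. -/
def Bf (u v : Fin 3 → K) : K := v 0 * u 2 + v 1 * (-2 * u 1) + v 2 * u 0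

lemma Bf_comm (u v : Fin 3 → K) : Bf u v = Bf v u := by
  simp only [Bf]; ring

lemma onPerp_iff (p r : Pt K) : OnPerp K p r ↔ Bf p.rep r.rep = 0 := Iff.rfl

lemma onPerp_comm {p r : Pt K} : OnPerp K p r ↔ OnPerp K r p := by
  rw [onPerp_iff, onPerp_iff, Bf_comm]

lemma internal_mk (v : Fin 3 → K) (hv : v ≠ 0) :
    Internal K (Projectivization.mk K v hv) ↔ ¬ IsSquare (Qf K v) := by
  obtain ⟨a, ha⟩ := Projectivization.exists_smul_eq_mk_rep K v hv
  have h : Qf K (Projectivization.mk K v hv).rep = (a : K) * a * Qf K v := by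
    rw [← ha]; simp only [Qf, Pi.smul_apply, Units.smul_def, smul_eq_mul]; ring
  have ha0 : (a : K) ≠ 0 := a.ne_zero
  simp only [Internal, Nonsq, h, not_iff_not]
  constructor
  · rintro ⟨x, hx⟩
    refine ⟨x / a, ?_⟩
    field_simp
    linear_combination hx
  · rintro ⟨x, hx⟩
    exact ⟨a * x, by rw [hx]; ring⟩

lemma onPerp_mk_left (v : Fin 3 → K) (hv : v ≠ 0) (r : Pt K) :
    OnPerp K (Projectivization.mk K v hv) r ↔ Bf v r.rep = 0 := by
  obtain ⟨a, ha⟩ := Projectivization.exists_smul_eq_mk_rep K v hv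
  have h : Bf (Projectivization.mk K v hv).rep r.rep = a * Bf v r.rep := by
    rw [← ha]; simp only [Bf, Pi.smul_apply, Units.smul_def, smul_eq_mul]; ring
  rw [onPerp_iff, h]; simp

lemma onPerp_mk (u v : Fin 3 → K) (hu : u ≠ 0) (hv : v ≠ 0) :
    OnPerp K (Projectivization.mk K u hu) (Projectivization.mk K v hv) ↔ Bf u v = 0 := by
  obtain ⟨a, ha⟩ := Projectivization.exists_smul_eq_mk_rep K v hv
  rw [onPerp_mk_left, ← ha]
  have h : Bf u (a • v) = a * Bf u v := by
    simp only [Bf, Pi.smul_apply, Units.smul_def, smul_eq_mul]; ring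
  rw [h]; simp

lemma internal_Qf_ne {p : Pt K} (hp : Internal K p) : Qf K p.rep ≠ 0 := by
  intro h; exact hp (by rw [h]; exact IsSquare.zero)

lemma two_ne (h3 : Fintype.card K % 4 = 3) : (2 : K) ≠ 0 :=
  Ring.two_ne_zero (fun h => by
    have := FiniteField.even_card_of_char_two h
    omega)

lemma neg_one_nonsq (h3 : Fintype.card K % 4 = 3) : ¬ IsSquare (-1 : K) := by
  rw [FiniteField.isSquare_neg_one_iff]; omega

lemma not_perp_self (h3 : Fintype.card K % 4 = 3) {p : Pt K} (hp : Internal K p) :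
    ¬ OnPerp K p p := by
  rw [onPerp_iff]
  have h : Bf p.rep p.rep = -2 * Qf K p.rep := by simp only [Bf, Qf]; ring
  rw [h]
  exact mul_ne_zero (neg_ne_zero.mpr (two_ne h3)) (internal_Qf_ne hp)

/-- The polar line of an internal point is a passant: it contains no point of the conic. -/
lemma Qf_ne_of_perp {p c : Pt K} (hp : Internal K p) (h : OnPerp K p c) : Qf K c.rep ≠ 0 := by
  intro hc
  have hnz := c.rep_nonzero
  rw [onPerp_iff] at h
  simp only [Internal, Nonsq] at hp
  generalize p.rep = u at *
  generalize c.rep = w at *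
  simp only [Bf, Qf] at *
  by_cases h0 : w 0 = 0
  · have h1 : w 1 = 0 := by simpa [h0] using hc
    have h2 : w 2 * u 0 = 0 := by simpa [h0, h1] using h
    rcases mul_eq_zero.mp h2 with h2 | h2
    · apply hnz
      funext i; fin_cases i <;> simp [h0, h1, h2]
    · exact hp ⟨u 1, by rw [h2]; ring⟩
  · refine hp ⟨(w 0 * u 1 - w 1 * u 0) / w 0, ?_⟩
    field_simp
    linear_combination (-(w 0 * u 0)) * h - u 0 ^ 2 * hc

/-- A vector orthogonal, for the polar form, to both `u` and `v`. -/
def cr (u v : Fin 3 → K) : Fin 3 → K :=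
  ![2 * (u 0 * v 1 - u 1 * v 0), u 0 * v 2 - u 2 * v 0, 2 * (u 1 * v 2 - u 2 * v 1)]

lemma Bf_cr_left (u v : Fin 3 → K) : Bf u (cr u v) = 0 := by
  simp [Bf, cr]; ring

lemma Bf_cr_right (u v : Fin 3 → K) : Bf v (cr u v) = 0 := by
  simp [Bf, cr]; ring

lemma Qf_cr (u v : Fin 3 → K) : Qf K (cr u v) = Bf u v ^ 2 - 4 * Qf K u * Qf K v := by
  simp [Bf, cr, Qf]; ring

lemma pt_ext {p r : Pt K} (h01 : p.rep 0 * r.rep 1 = p.rep 1 * r.rep 0)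
    (h02 : p.rep 0 * r.rep 2 = p.rep 2 * r.rep 0)
    (h12 : p.rep 1 * r.rep 2 = p.rep 2 * r.rep 1) : p = r := by
  have hr := r.rep_nonzero
  obtain ⟨i, hi⟩ := Function.ne_iff.mp hr
  rw [← p.mk_rep, ← r.mk_rep, Projectivization.mk_eq_mk_iff']
  refine ⟨p.rep i / r.rep i, ?_⟩
  simp only [Pi.zero_apply] at hi
  funext j
  simp only [Pi.smul_apply, smul_eq_mul]
  rw [div_mul_eq_mul_div, div_eq_iff hi]
  fin_cases i <;> fin_cases j <;> simp_all

lemma cr_ne_zero (h3 : Fintype.card K % 4 = 3) {p s : Pt K} (h : p ≠ s) :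
    cr p.rep s.rep ≠ 0 := by
  intro hc
  have h2 := two_ne h3
  have e0 := congrFun hc 0
  have e1 := congrFun hc 1
  have e2 := congrFun hc 2
  simp [cr, h2, sub_eq_zero] at e0 e1 e2
  exact h (pt_ext e0 e1 e2)

/-- Distinct points have a common conjugate point, namely the pole of the line joining them. -/
lemma exists_pole (h3 : Fintype.card K % 4 = 3) {p s : Pt K} (h : p ≠ s) :
    ∃ c : Pt K, OnPerp K p c ∧ OnPerp K s c := by
  refine ⟨Projectivization.mk K _ (cr_ne_zero h3 h), ?_, ?_⟩
  · rw [onPerp_comm, onPerp_mk_left, Bf_comm]; exact Bf_cr_left _ _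
  · rw [onPerp_comm, onPerp_mk_left, Bf_comm]; exact Bf_cr_right _ _

lemma pole_eq_mk (h3 : Fintype.card K % 4 = 3) {p s c : Pt K} (h : p ≠ s)
    (hp : OnPerp K p c) (hs : OnPerp K s c) :
    c = Projectivization.mk K _ (cr_ne_zero h3 h) := by
  have h2 := two_ne h3
  have hw := cr_ne_zero h3 h
  obtain ⟨a, ha⟩ := Projectivization.exists_smul_eq_mk_rep K _ hw
  rw [onPerp_iff] at hp hs
  simp only [Bf] at hp hs
  -- it suffices that `c` and `cr p s` have vanishing 2×2 minors
  apply pt_ext <;> rw [← ha] <;> simp [cr, Units.smul_def]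
  · linear_combination (a : K) * (p.rep 0 * hs - s.rep 0 * hp)
  · linear_combination (a : K) * 2 * (p.rep 1 * hs - s.rep 1 * hp)
  · linear_combination (a : K) * (p.rep 2 * hs - s.rep 2 * hp)

lemma pole_unique (h3 : Fintype.card K % 4 = 3) {p s c d : Pt K} (h : p ≠ s)
    (hp : OnPerp K p c) (hs : OnPerp K s c) (hp' : OnPerp K p d) (hs' : OnPerp K s d) : c = d :=
  (pole_eq_mk h3 h hp hs).trans (pole_eq_mk h3 h hp' hs').symm

/-- The third vertex of a self-polar triangle with two internal vertices is internal, because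
`Q(p × s) = -4 Q(p) Q(s)` and `-1` is a nonsquare. -/
lemma internal_of_perp (h3 : Fintype.card K % 4 = 3) {p s c : Pt K} (hp : Internal K p)
    (hs : Internal K s) (h : OnPerp K p s) (hpc : OnPerp K p c) (hsc : OnPerp K s c) :
    Internal K c := by
  have hne : p ≠ s := by rintro rfl; exact not_perp_self h3 hp h
  rw [pole_eq_mk h3 hne hpc hsc, internal_mk, Qf_cr]
  rw [onPerp_iff] at h
  rw [h]
  have hp0 := internal_Qf_ne hp
  have hs0 := internal_Qf_ne hs
  have h2 := two_ne h3
  obtain ⟨x, hx⟩ : IsSquare (Qf K p.rep * Qf K s.rep) := by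
    rw [← quadraticChar_one_iff_isSquare (mul_ne_zero hp0 hs0), map_mul,
      quadraticChar_neg_one_iff_not_isSquare.mpr hp,
      quadraticChar_neg_one_iff_not_isSquare.mpr hs]
    norm_num
  have hx0 : x ≠ 0 := by rintro rfl; simp [hp0, hs0] at hx
  rintro ⟨y, hy⟩
  refine neg_one_nonsq h3 ⟨y / (2 * x), ?_⟩
  field_simp
  linear_combination hy + 4 * hx

/-! ### Similitudes acting on internal points -/

/-- A linear map `f` that multiplies the polar form by the nonzero square `k ^ 2`. -/
def IsSim (f : (Fin 3 → K) →ₗ[K] (Fin 3 → K)) : Prop :=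
  ∃ k : K, k ≠ 0 ∧ ∀ u v, Bf (f u) (f v) = k ^ 2 * Bf u v

lemma IsSim.injective (h3 : Fintype.card K % 4 = 3) {f : (Fin 3 → K) →ₗ[K] (Fin 3 → K)}
    (hf : IsSim f) : Function.Injective f := by
  have h2 := two_ne h3
  obtain ⟨k, hk, hf⟩ := hf
  rw [injective_iff_map_eq_zero]
  intro v hv
  have h (u) : Bf v u = 0 := by
    have h := hf v u
    rw [hv] at h
    simpa [Bf, hk] using h.symm
  have e0 := h ![1, 0, 0]
  have e1 := h ![0, 1, 0]
  have e2 := h ![0, 0, 1]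
  simp [Bf, h2] at e0 e1 e2
  funext i; fin_cases i <;> simp [e0, e1, e2]

lemma IsSim.onPerp_map {f : (Fin 3 → K) →ₗ[K] (Fin 3 → K)} (hf : IsSim f)
    (hi : Function.Injective f) (p r : Pt K) :
    OnPerp K (Projectivization.map f hi p) (Projectivization.map f hi r) ↔ OnPerp K p r := by
  obtain ⟨k, hk, hf⟩ := hf
  induction p using Projectivization.ind with | h u hu =>
  induction r using Projectivization.ind with | h v hv =>
  rw [Projectivization.map_mk, Projectivization.map_mk, onPerp_mk, onPerp_mk, hf]
  simp [hk]

lemma IsSim.internal_map (h3 : Fintype.card K % 4 = 3) {f : (Fin 3 → K) →ₗ[K] (Fin 3 → K)}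
    (hf : IsSim f) (hi : Function.Injective f) {p : Pt K} (hp : Internal K p) :
    Internal K (Projectivization.map f hi p) := by
  have h2 := two_ne h3
  obtain ⟨k, hk, hf⟩ := hf
  induction p using Projectivization.ind with | h u hu =>
  rw [internal_mk] at hp
  rw [Projectivization.map_mk, internal_mk]
  have hB (v : Fin 3 → K) : Bf v v = -2 * Qf K v := by simp only [Bf, Qf]; ring
  have h : Qf K (f u) = k ^ 2 * Qf K u := by
    have h := hf u u
    rw [hB, hB] at h
    apply mul_left_cancel₀ (neg_ne_zero.mpr h2)
    linear_combination h
  rw [h]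
  rintro ⟨y, hy⟩
  refine hp ⟨y / k, ?_⟩
  field_simp
  linear_combination hy

/-- The permutation of the internal points induced by a similitude. -/
def IsSim.perm (h3 : Fintype.card K % 4 = 3) {f : (Fin 3 → K) →ₗ[K] (Fin 3 → K)}
    (hf : IsSim f) : Equiv.Perm (Ipts K) :=
  Equiv.ofBijective
    (fun p => ⟨Projectivization.map f (hf.injective h3) p.1, hf.internal_map h3 _ p.2⟩)
    (Finite.injective_iff_bijective.mp fun _ _ h =>
      Subtype.ext (Projectivization.map_injective f (hf.injective h3) (Subtype.ext_iff.mp h)))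

lemma IsSim.perm_val (h3 : Fintype.card K % 4 = 3) {f : (Fin 3 → K) →ₗ[K] (Fin 3 → K)}
    (hf : IsSim f) (p : Ipts K) :
    (hf.perm h3 p).1 = Projectivization.map f (hf.injective h3) p.1 := rfl

lemma IsSim.A_submatrix (h3 : Fintype.card K % 4 = 3) {f : (Fin 3 → K) →ₗ[K] (Fin 3 → K)}
    (hf : IsSim f) : (AmatF K).submatrix (hf.perm h3) (hf.perm h3) = AmatF K := by
  ext p r
  simp only [AmatF, Matrix.submatrix_apply, Matrix.of_apply, hf.perm_val, hf.onPerp_map]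

lemma IsSim.A2_submatrix (h3 : Fintype.card K % 4 = 3) {f : (Fin 3 → K) →ₗ[K] (Fin 3 → K)}
    (hf : IsSim f) : (AmatF K ^ 2).submatrix (hf.perm h3) (hf.perm h3) = AmatF K ^ 2 := by
  rw [sq, ← Matrix.submatrix_mul_equiv _ _ _ (hf.perm h3), hf.A_submatrix]

/-! ### Reflections and sums over internal points -/

/-- The reflection in `w`, scaled by `Q(w)` to avoid denominators. -/
def refl (w : Fin 3 → K) : (Fin 3 → K) →ₗ[K] (Fin 3 → K) where
  toFun v := Qf K w • v + Bf v w • w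
  map_add' u v := by
    funext i; simp only [Bf, Pi.add_apply, Pi.smul_apply, smul_eq_mul]; ring
  map_smul' a v := by
    funext i; simp only [Bf, Pi.add_apply, Pi.smul_apply, smul_eq_mul, RingHom.id_apply]; ring

lemma refl_apply (w v : Fin 3 → K) : refl w v = Qf K w • v + Bf v w • w := rfl

lemma refl_isSim (w : Fin 3 → K) (hw : Qf K w ≠ 0) : IsSim (refl w) := by
  refine ⟨Qf K w, hw, fun u v => ?_⟩
  simp only [refl_apply, Bf, Qf, Pi.add_apply, Pi.smul_apply, smul_eq_mul]
  ring

lemma refl_refl (w v : Fin 3 → K) : refl w (refl w v) = (Qf K w ^ 2) • v := by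
  funext i
  simp only [refl_apply, Bf, Qf, Pi.add_apply, Pi.smul_apply, smul_eq_mul]
  ring

lemma refl_perm_invol (h3 : Fintype.card K % 4 = 3) (w : Fin 3 → K) (hw : Qf K w ≠ 0)
    (p : Ipts K) : (refl_isSim w hw).perm h3 ((refl_isSim w hw).perm h3 p) = p := by
  apply Subtype.ext
  rw [IsSim.perm_val, IsSim.perm_val]
  obtain ⟨p, hp⟩ := p
  dsimp only
  clear hp
  induction p using Projectivization.ind with | h u hu =>
  rw [Projectivization.map_mk, Projectivization.map_mk, Projectivization.mk_eq_mk_iff']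
  exact ⟨Qf K w ^ 2, (refl_refl w u).symm⟩

lemma refl_fixed_iff (h3 : Fintype.card K % 4 = 3) (c : Pt K) (hc : Qf K c.rep ≠ 0)
    (p : Ipts K) :
    (refl_isSim c.rep hc).perm h3 p = p ↔ p.1 = c ∨ OnPerp K c p.1 := by
  rw [Subtype.ext_iff, IsSim.perm_val]
  obtain ⟨p, hp⟩ := p
  dsimp only
  have key : Projectivization.map (refl c.rep) ((refl_isSim c.rep hc).injective h3) p = p ↔
      ∃ a : K, a • p.rep = Qf K c.rep • p.rep + Bf p.rep c.rep • c.rep := by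
    conv_lhs => rw [← p.mk_rep]
    rw [Projectivization.map_mk, Projectivization.mk_eq_mk_iff']
    rfl
  rw [key, onPerp_iff, Bf_comm c.rep]
  constructor
  · rintro ⟨a, ha⟩
    by_cases hB : Bf p.rep c.rep = 0
    · exact Or.inr hB
    · left
      rw [eq_comm, ← p.mk_rep, ← c.mk_rep, Projectivization.mk_eq_mk_iff']
      refine ⟨(a - Qf K c.rep) / Bf p.rep c.rep, ?_⟩
      funext i
      have hi := congrFun ha i
      simp only [Pi.add_apply, Pi.smul_apply, smul_eq_mul] at hi ⊢
      field_simp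
      linear_combination hi
  · rintro (h | h)
    · subst h
      refine ⟨- Qf K p.rep, ?_⟩
      funext i
      simp only [Pi.add_apply, Pi.smul_apply, smul_eq_mul, Bf, Qf]
      ring
    · exact ⟨Qf K c.rep, by simp [h]⟩

lemma add_self_F (x : F2bar) : x + x = 0 := CharTwo.add_self_eq_zero x

/-- In characteristic 2, the sum of a function invariant under the reflection in `c` reduces to
the fixed points of this reflection: `c` itself and the points of `c^⊥`. -/
lemma sum_reflection (h3 : Fintype.card K % 4 = 3) (c : Pt K) (hc : Qf K c.rep ≠ 0)
    (f : Ipts K → F2bar) (hf : ∀ p, f ((refl_isSim c.rep hc).perm h3 p) = f p) :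
    ∑ p, f p = (∑ p : Ipts K, if p.1 = c then f p else 0) +
      ∑ p : Ipts K, if OnPerp K c p.1 then f p else 0 := by
  have hcc : ¬ OnPerp K c c := by
    rw [onPerp_iff]
    have h : Bf c.rep c.rep = -2 * Qf K c.rep := by simp only [Bf, Qf]; ring
    rw [h]
    exact mul_ne_zero (neg_ne_zero.mpr (two_ne h3)) hc
  have h0 : ∑ p : Ipts K, (if p.1 = c ∨ OnPerp K c p.1 then 0 else f p) = 0 := by
    refine Finset.sum_involution (fun p _ => (refl_isSim c.rep hc).perm h3 p) ?_ ?_ ?_ ?_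
    · intro p _
      rw [hf]
      have : (((refl_isSim c.rep hc).perm h3 p).1 = c ∨
          OnPerp K c ((refl_isSim c.rep hc).perm h3 p).1) ↔ (p.1 = c ∨ OnPerp K c p.1) := by
        rw [← refl_fixed_iff h3 c hc, ← refl_fixed_iff h3 c hc]
        exact (Equiv.apply_eq_iff_eq _)
      simp only [this]
      exact add_self_F _
    · intro p _ hp h
      rw [refl_fixed_iff h3 c hc] at h
      simp [h] at hp
    · intro p _; exact Finset.mem_univ _
    · intro p _; exact refl_perm_invol h3 _ hc p
  rw [← Finset.sum_add_distrib, ← sub_eq_zero, ← Finset.sum_sub_distrib]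
  refine Eq.trans ?_ h0
  refine Finset.sum_congr rfl fun p _ => ?_
  by_cases h1 : p.1 = c
  · simp [h1, hcc]
  · by_cases h2 : OnPerp K c p.1 <;> simp [h1, h2]

/-! ### The matrix `A` modulo 2 -/

lemma A_apply (p r : Ipts K) : AmatF K p r = if OnPerp K p.1 r.1 then 1 else 0 := rfl

lemma A_symm (p r : Ipts K) : AmatF K p r = AmatF K r p := by
  simp only [A_apply, onPerp_comm]

lemma A2_apply (p r : Ipts K) : (AmatF K ^ 2) p r = ∑ t, AmatF K p t * AmatF K t r := by
  rw [sq, Matrix.mul_apply]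

/-- Off the diagonal, `A²` records whether the pole of the joining line is internal. -/
lemma A2_ne (h3 : Fintype.card K % 4 = 3) {p s : Ipts K} {c : Pt K} (h : p ≠ s)
    (hp : OnPerp K p.1 c) (hs : OnPerp K s.1 c) :
    (AmatF K ^ 2) p s = if Internal K c then 1 else 0 := by
  have hne : p.1 ≠ s.1 := fun e => h (Subtype.ext e)
  have key (t : Ipts K) : AmatF K p t * AmatF K t s = if t.1 = c then 1 else 0 := by
    rw [A_symm t s, A_apply, A_apply]
    by_cases ht : t.1 = c
    · simp [ht, hp, hs]
    · have : ¬ (OnPerp K p.1 t.1 ∧ OnPerp K s.1 t.1) := fun ⟨h1, h2⟩ =>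
        ht (pole_unique h3 hne h1 h2 hp hs)
      by_cases h1 : OnPerp K p.1 t.1
      · have h2 : ¬ OnPerp K s.1 t.1 := fun h2 => this ⟨h1, h2⟩
        simp [h2, ht]
      · simp [h1, ht]
  rw [A2_apply]
  simp only [key]
  split_ifs with hc
  · rw [Finset.sum_eq_single (⟨c, hc⟩ : Ipts K)]
    · simp
    · intro t _ ht
      exact if_neg fun e => ht (Subtype.ext e)
    · simp
  · exact Finset.sum_eq_zero fun t _ => if_neg fun (e : t.1 = c) => hc (e ▸ t.2)

lemma A2_perp (h3 : Fintype.card K % 4 = 3) {p s : Ipts K} (h : OnPerp K p.1 s.1) :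
    (AmatF K ^ 2) p s = 1 := by
  have hne : p ≠ s := by rintro rfl; exact not_perp_self h3 p.2 h
  obtain ⟨c, hp, hs⟩ := exists_pole h3 (fun e : p.1 = s.1 => hne (Subtype.ext e))
  rw [A2_ne h3 hne hp hs, if_pos (internal_of_perp h3 p.2 s.2 h hp hs)]

lemma sum_ite_internal {c : Pt K} (f : Ipts K → F2bar) (hc : Internal K c) :
    (∑ p : Ipts K, if p.1 = c then f p else 0) = f ⟨c, hc⟩ := by
  rw [Finset.sum_eq_single (⟨c, hc⟩ : Ipts K)]
  · simp
  · intro t _ ht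
    exact if_neg fun e => ht (Subtype.ext e)
  · simp

lemma perm_refl_of_perp (h3 : Fintype.card K % 4 = 3) {c : Pt K} (hc : Qf K c.rep ≠ 0)
    {p : Ipts K} (h : OnPerp K c p.1) : (refl_isSim c.rep hc).perm h3 p = p :=
  (refl_fixed_iff h3 c hc p).mpr (Or.inr h)

lemma A_perm_right (h3 : Fintype.card K % 4 = 3) {c : Pt K} (hc : Qf K c.rep ≠ 0)
    {p : Ipts K} (h : OnPerp K c p.1) (r : Ipts K) :
    AmatF K p ((refl_isSim c.rep hc).perm h3 r) = AmatF K p r := by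
  have := congrFun (congrFun ((refl_isSim c.rep hc).A_submatrix h3) p) r
  rwa [Matrix.submatrix_apply, perm_refl_of_perp h3 hc h] at this

lemma A2_perm_left (h3 : Fintype.card K % 4 = 3) {c : Pt K} (hc : Qf K c.rep ≠ 0)
    {s : Ipts K} (h : OnPerp K c s.1) (r : Ipts K) :
    (AmatF K ^ 2) ((refl_isSim c.rep hc).perm h3 r) s = (AmatF K ^ 2) r s := by
  have := congrFun (congrFun ((refl_isSim c.rep hc).A2_submatrix h3) r) s
  rwa [Matrix.submatrix_apply, perm_refl_of_perp h3 hc h] at this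

/-- A passant contains an even number of internal points. -/
lemma row_sum (h3 : Fintype.card K % 4 = 3) (p : Ipts K) : ∑ r, AmatF K p r = 0 := by
  by_cases hex : ∃ w : Ipts K, OnPerp K p.1 w.1
  · obtain ⟨w, hw⟩ := hex
    have hc := internal_Qf_ne w.2
    rw [sum_reflection h3 w.1 hc _ (A_perm_right h3 hc (onPerp_comm.mp hw)),
      sum_ite_internal _ w.2]
    have h1 : AmatF K p ⟨w.1, w.2⟩ = 1 := by rw [A_apply]; exact if_pos hw
    have h2 : (∑ r : Ipts K, if OnPerp K w.1 r.1 then AmatF K p r else 0) = 1 := by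
      rw [← A2_perp h3 hw, A2_apply]
      refine Finset.sum_congr rfl fun r _ => ?_
      rw [A_symm r w, A_apply w r]
      split_ifs <;> simp
    rw [h1, h2]
    exact add_self_F 1
  · push Not at hex
    exact Finset.sum_eq_zero fun r _ => by rw [A_apply]; exact if_neg (hex r)

lemma A2_diag (h3 : Fintype.card K % 4 = 3) (p : Ipts K) : (AmatF K ^ 2) p p = 0 := by
  rw [A2_apply, ← row_sum h3 p]
  refine Finset.sum_congr rfl fun r _ => ?_
  rw [A_symm r p, A_apply]
  split_ifs <;> simp

lemma card_odd (h3 : Fintype.card K % 4 = 3) : ∑ _p : Ipts K, (1 : F2bar) = 1 := by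
  have h0 : (![1, 0, 1] : Fin 3 → K) ≠ 0 := fun h => by simpa using congrFun h 0
  have hw : Internal K (Projectivization.mk K (![1, 0, 1] : Fin 3 → K) h0) := by
    rw [internal_mk]
    simpa [Qf] using neg_one_nonsq h3
  rw [sum_reflection h3 _ (internal_Qf_ne hw) (fun _ => 1) (fun _ => rfl),
    sum_ite_internal _ hw]
  have := row_sum h3 ⟨_, hw⟩
  simp only [A_apply] at this
  rw [this, add_zero]

lemma A3 (h3 : Fintype.card K % 4 = 3) : AmatF K * AmatF K ^ 2 = AmatF K := by
  ext p s
  rw [Matrix.mul_apply]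
  by_cases hps : p = s
  · subst hps
    rw [A_apply p p, if_neg (not_perp_self h3 p.2), ← row_sum h3 p]
    refine Finset.sum_congr rfl fun r _ => ?_
    by_cases h : OnPerp K p.1 r.1
    · rw [A2_perp h3 (onPerp_comm.mp h), mul_one]
    · rw [A_apply, if_neg h, zero_mul]
  obtain ⟨c, hp, hs⟩ := exists_pole h3 (fun e : p.1 = s.1 => hps (Subtype.ext e))
  have hc := Qf_ne_of_perp p.2 hp
  have hcp := onPerp_comm.mp hp
  have hcs := onPerp_comm.mp hs
  rw [sum_reflection h3 c hc _ (fun r => by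
    rw [A_perm_right h3 hc hcp, A2_perm_left h3 hc hcs])]
  by_cases hci : Internal K c
  · rw [sum_ite_internal _ hci, A_apply p, if_pos hp, A2_perp h3 hcs, one_mul]
    have hpc : p.1 ≠ c := by rintro e; exact not_perp_self h3 p.2 (by rw [← e] at hp; exact hp)
    obtain ⟨d, hpd, hcd⟩ := exists_pole h3 hpc
    have hd : Internal K d := internal_of_perp h3 p.2 hci hp hpd hcd
    -- `d` is the only point of `p^⊥` on `c^⊥`
    have hsum : (∑ r : Ipts K, if OnPerp K c r.1 then AmatF K p r * (AmatF K ^ 2) r s else 0)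
        = (AmatF K ^ 2) ⟨d, hd⟩ s := by
      rw [Finset.sum_eq_single (⟨d, hd⟩ : Ipts K)]
      · rw [if_pos hcd, A_apply, if_pos hpd, one_mul]
      · intro r _ hr
        by_cases h1 : OnPerp K c r.1
        · rw [if_pos h1, A_apply, if_neg, zero_mul]
          exact fun h2 => hr (Subtype.ext (pole_unique h3 hpc h2 h1 hpd hcd))
        · exact if_neg h1
      · simp
    rw [hsum]
    by_cases hperp : OnPerp K p.1 s.1
    · have hds : (⟨d, hd⟩ : Ipts K) = s := Subtype.ext (pole_unique h3 hpc hpd hcd hperp hcs)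
      rw [hds, A2_diag h3, A_apply, if_pos hperp, add_zero]
    · have hds : (⟨d, hd⟩ : Ipts K) ≠ s := by
        rintro rfl; exact hperp hpd
      rw [A2_ne h3 hds (onPerp_comm.mp hcd) hs, if_pos hci, A_apply, if_neg hperp]
      exact add_self_F 1
  · have hperp : ¬ OnPerp K p.1 s.1 := fun h => hci (internal_of_perp h3 p.2 s.2 h hp hs)
    rw [A_apply p s, if_neg hperp]
    rw [Finset.sum_eq_zero, Finset.sum_eq_zero, add_zero]
    · intro r _
      by_cases h1 : OnPerp K c r.1
      · rw [if_pos h1]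
        by_cases hrs : r = s
        · rw [hrs, A_apply, if_neg hperp, zero_mul]
        · rw [A2_ne h3 hrs (onPerp_comm.mp h1) hs, if_neg hci, mul_zero]
      · exact if_neg h1
    · intro r _
      exact if_neg fun (e : r.1 = c) => hci (e ▸ r.2)

lemma J_mul_A (h3 : Fintype.card K % 4 = 3) : JmatF K * AmatF K = 0 := by
  ext p s
  rw [Matrix.mul_apply]
  simp only [JmatF, Matrix.of_apply, one_mul, Matrix.zero_apply]
  rw [← row_sum h3 s]
  exact Finset.sum_congr rfl fun r _ => A_symm r s

lemma A_mul_J (h3 : Fintype.card K % 4 = 3) : AmatF K * JmatF K = 0 := by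
  ext p s
  rw [Matrix.mul_apply]
  simp only [JmatF, Matrix.of_apply, mul_one, Matrix.zero_apply]
  exact row_sum h3 p

lemma J_mul_J (h3 : Fintype.card K % 4 = 3) : JmatF K * JmatF K = JmatF K := by
  ext p s
  rw [Matrix.mul_apply]
  simp only [JmatF, Matrix.of_apply, mul_one]
  exact card_odd h3

/-! ### The action of `H` -/

lemma Hset_isSim (M : Matrix (Fin 3) (Fin 3) K) (hM : M ∈ Hset K) :
    IsSim (Matrix.vecMulLinear M) := by
  obtain ⟨a, b, c, d, hdet, rfl⟩ := hM
  refine ⟨1, one_ne_zero, fun u v => ?_⟩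
  have h2 : (a * d - b * c) ^ 2 = 1 := by rw [hdet, one_pow]
  simp [Bf, Matrix.vecMul, dotProduct, Fin.sum_univ_three]
  linear_combination (v 0 * u 2 + v 1 * (-2 * u 1) + v 2 * u 0) * h2

lemma actPt_eq (h3 : Fintype.card K % 4 = 3) (M : Matrix (Fin 3) (Fin 3) K) (hM : M ∈ Hset K)
    (p : Ipts K) : actPt K M p.1 = ((Hset_isSim M hM).perm h3 p).1 := by
  have hi := (Hset_isSim M hM).injective h3
  have hne : Matrix.vecMul p.1.rep M ≠ 0 := fun h =>
    p.1.rep_nonzero (hi (by simpa using h))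
  rw [IsSim.perm_val, actPt, dif_pos hne]
  conv_rhs => rw [← p.1.mk_rep]
  rw [Projectivization.map_mk]
  rfl

lemma actMat_eq (h3 : Fintype.card K % 4 = 3) (M : Matrix (Fin 3) (Fin 3) K) (hM : M ∈ Hset K) :
    actMat K M = ((Hset_isSim M hM).perm h3).toPEquiv.toMatrix := by
  ext p r
  simp only [actMat, Matrix.of_apply, actPt_eq h3 M hM, PEquiv.toMatrix_apply,
    Equiv.toPEquiv_apply, Option.mem_def, Option.some.injEq, Subtype.ext_iff]

lemma commute_of_submatrix (σ : Equiv.Perm (Ipts K)) (N : Matrix (Ipts K) (Ipts K) F2bar)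
    (h : N.submatrix σ σ = N) :
    N * (σ.toPEquiv.toMatrix) = σ.toPEquiv.toMatrix * N := by
  rw [PEquiv.toMatrix_toPEquiv_mul, PEquiv.mul_toMatrix_toPEquiv]
  ext p r
  have := congrFun (congrFun h p) (σ.symm r)
  simpa using this.symm

lemma mu2_commute (h3 : Fintype.card K % 4 = 3) (M : Matrix (Fin 3) (Fin 3) K)
    (hM : M ∈ Hset K) :
    (AmatF K ^ 2 + 1 + JmatF K) * actMat K M = actMat K M * (AmatF K ^ 2 + 1 + JmatF K) := by
  rw [actMat_eq h3 M hM]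
  apply commute_of_submatrix
  rw [Matrix.submatrix_add, Matrix.submatrix_add, Pi.add_apply, Pi.add_apply, Pi.add_apply,
    Pi.add_apply, IsSim.A2_submatrix, Matrix.submatrix_one_equiv]
  rfl

lemma Jvec_act (h3 : Fintype.card K % 4 = 3) (M : Matrix (Fin 3) (Fin 3) K)
    (hM : M ∈ Hset K) : actF K M (Jvec K) = Jvec K := by
  funext r
  set σ := (Hset_isSim M hM).perm h3
  simp only [actF, Matrix.vecMulLinear_apply, Matrix.vecMul, dotProduct, Jvec, one_mul, actMat,
    Matrix.of_apply, actPt_eq h3 M hM]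
  rw [Finset.sum_eq_single (σ.symm r)]
  · exact if_pos (by rw [Equiv.apply_symm_apply])
  · intro t _ ht
    exact if_neg fun e => ht (by rw [Equiv.eq_symm_apply]; exact Subtype.ext e)
  · simp

variable (K)

/-- If `q ≡ 3 (mod 4)`, then `Ker(φ)` is the internal direct sum of the
trivial `F[H]`-submodule spanned by `Ĵ` and the `F[H]`-submodule `Im(μ₂)`,
where `μ₂` has matrix `A^2 + Id + J`. -/
theorem ker_phi_eq_J_oplus_mu2 (h3 : Fintype.card K % 4 = 3) :
    (∀ M ∈ Hset K, actF K M (Jvec K) = Jvec K) ∧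
    (∀ M ∈ Hset K, ∀ x ∈ LinearMap.range (mu2 K), actF K M x ∈ LinearMap.range (mu2 K)) ∧
    Submodule.span F2bar {Jvec K} ⊓ LinearMap.range (mu2 K) = ⊥ ∧
    Submodule.span F2bar {Jvec K} ⊔ LinearMap.range (mu2 K) = LinearMap.ker (phi K) := by
  set N := AmatF K ^ 2 + 1 + JmatF K with hN
  have hNA : N * AmatF K = 0 := by
    have h : AmatF K ^ 2 * AmatF K = AmatF K := by rw [← pow_succ, pow_succ', A3 h3]
    rw [hN, add_mul, add_mul, h, J_mul_A h3, one_mul, add_zero]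
    ext p r
    rw [Matrix.add_apply]
    exact add_self_F _
  have hNJ : N * JmatF K = 0 := by
    rw [hN, add_mul, add_mul, sq, mul_assoc, A_mul_J h3, mul_zero, J_mul_J h3, one_mul, zero_add]
    ext p r
    rw [Matrix.add_apply]
    exact add_self_F _
  have hJJ : Matrix.vecMul (Jvec K) (JmatF K) = Jvec K := by
    funext r
    simpa [Matrix.vecMul, dotProduct, Jvec, JmatF] using card_odd h3
  have hJA : Matrix.vecMul (Jvec K) (AmatF K) = 0 := by
    funext r
    exact congrFun (congrFun (J_mul_A h3) r) r
  have hxJ (x : Ipts K → F2bar) : Matrix.vecMul x (JmatF K) = (∑ p, x p) • Jvec K := by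
    funext r
    simp [Matrix.vecMul, dotProduct, Jvec, JmatF]
  refine ⟨fun M hM => Jvec_act h3 M hM, ?_, ?_, ?_⟩
  · rintro M hM _ ⟨y, rfl⟩
    refine ⟨actF K M y, ?_⟩
    simp only [mu2, actF, Matrix.vecMulLinear_apply, Matrix.vecMul_vecMul]
    rw [mu2_commute h3 M hM]
  · rw [eq_bot_iff]
    rintro x ⟨hx1, y, rfl⟩
    obtain ⟨a, ha⟩ := Submodule.mem_span_singleton.mp hx1
    have h : Matrix.vecMul (mu2 K y) (JmatF K) = 0 := by
      rw [mu2, Matrix.vecMulLinear_apply, Matrix.vecMul_vecMul, ← hN, hNJ, Matrix.vecMul_zero]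
    rw [← ha, Matrix.smul_vecMul, hJJ] at h
    rw [← ha, h]
    exact Submodule.zero_mem _
  · apply le_antisymm
    · rw [sup_le_iff, Submodule.span_singleton_le_iff_mem]
      refine ⟨hJA, ?_⟩
      rintro _ ⟨y, rfl⟩
      rw [LinearMap.mem_ker, mu2, phi, Matrix.vecMulLinear_apply, Matrix.vecMulLinear_apply,
        Matrix.vecMul_vecMul, ← hN, hNA, Matrix.vecMul_zero]
    · intro x hx
      rw [LinearMap.mem_ker, phi, Matrix.vecMulLinear_apply] at hx
      have hsq : Matrix.vecMul x (AmatF K ^ 2) = 0 := by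
        rw [sq, ← Matrix.vecMul_vecMul, hx, Matrix.zero_vecMul]
      -- `μ₂ x = x + x J` for `x` in the kernel, and signs are irrelevant
      have hmu : x = (∑ p, x p) • Jvec K + mu2 K x := by
        rw [mu2, Matrix.vecMulLinear_apply, Matrix.vecMul_add, Matrix.vecMul_add, hsq,
          Matrix.vecMul_one, hxJ, zero_add, add_left_comm]
        funext p
        simp [add_self_F]
      rw [hmu]
      exact Submodule.add_mem_sup (Submodule.smul_mem _ _ (Submodule.mem_span_singleton_self _))
        ⟨x, rfl⟩

end ConicPaper
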